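/- Let b(n) denote the number of partitions of n into parts congruent to ±1 mod 5. Then for every n ≥ 1, (15n² - 3n)·b(n) = ∑_{k=0}^{n-1} (11σ₃(n-k) + σ₁(n-k))·b(k) - 60·∑_{k=0}^{n-1} k·b(k)·σ₁(n-k). -/

import Mathlib

open scoped BigOperators

/-- `b n` = number of partitions of `n` into parts `≡ ±1 (mod 5)`. -/
noncomputable def mod5PartCountB (n : ℕ) : ℕ :=
  Nat.card {p : n.Partition // ∀ x ∈ p.parts, x % 5 = 1 ∨ x % 5 = 4}

/-!
Let `G` be the generating function of `b`, let `θ = q d/dq`, and let `A`, `S`, `T` be the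
generating functions of `∑ d` over the divisors `d ≡ ±1 (mod 5)` of `n`, of `σ₁` and of `σ₃`.
Counting parts gives `θ G = A G`. The recursion is the coefficientwise form of
`15 θ² G - 3 θ G = (11 T + S) G - 60 S θ G`, which follows from the Riccati equation
`15 A² + 60 S A + 15 θ A - 3 A = 11 T + S`.

The Riccati equation is proved by Liouville's elementary method. The subtractive Euclidean step
`(a, x), (b, y) ↦ (b - a, y), (a, x + y)` maps the solutions of `a x + b y = n` with `a < b`
bijectively to those with `x < y`. So for a symmetric `φ` with `φ a (a + b) = φ b (a + b)` the sum
of `φ a (a + b) - φ a b` over all solutions reduces to the solutions with `x = y` or `a = b`, that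
is, to a divisor sum. The function `φ` used here is a quadratic form whose coefficients depend on
residues modulo `5`, chosen so that only the products `a b` survive in `φ a (a + b) - φ a b`.
-/

section BilinearReps

open Finset

variable {M : Type*}

/-- The representations `n = a * x + b * y` by positive integers, encoded as `((a, x), (b, y))`. -/
def bilinearReps (n : ℕ) : Finset ((ℕ × ℕ) × (ℕ × ℕ)) :=
  (antidiagonal n).biUnion fun p => p.1.divisorsAntidiagonal ×ˢ p.2.divisorsAntidiagonal

lemma mem_bilinearReps {n a x b y : ℕ} :
    ((a, x), (b, y)) ∈ bilinearReps n ↔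
      (0 < a ∧ 0 < x) ∧ (0 < b ∧ 0 < y) ∧ a * x + b * y = n := by
  simp only [bilinearReps, mem_biUnion, HasAntidiagonal.mem_antidiagonal, mem_product,
    Nat.mem_divisorsAntidiagonal, Prod.exists]
  constructor
  · rintro ⟨_, _, h, ⟨rfl, hi⟩, rfl, hj⟩
    exact ⟨CanonicallyOrderedAdd.mul_pos.1 (Nat.pos_of_ne_zero hi),
      CanonicallyOrderedAdd.mul_pos.1 (Nat.pos_of_ne_zero hj), h⟩
  · rintro ⟨⟨ha, hx⟩, ⟨hb, hy⟩, h⟩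
    exact ⟨_, _, h, ⟨rfl, (Nat.mul_pos ha hx).ne'⟩, rfl, (Nat.mul_pos hb hy).ne'⟩

lemma sum_bilinearReps [AddCommMonoid M] (n : ℕ) (g : (ℕ × ℕ) × (ℕ × ℕ) → M) :
    ∑ q ∈ bilinearReps n, g q =
      ∑ p ∈ antidiagonal n, ∑ q ∈ p.1.divisorsAntidiagonal ×ˢ p.2.divisorsAntidiagonal, g q := by
  refine sum_biUnion fun p _ p' _ hne => disjoint_left.2 fun q hq hq' => hne ?_
  simp only [mem_product, Nat.mem_divisorsAntidiagonal] at hq hq'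
  exact Prod.ext (hq.1.1.symm.trans hq'.1.1) (hq.2.1.symm.trans hq'.2.1)

lemma sum_bilinearReps_swap [AddCommMonoid M] (n : ℕ) (g : (ℕ × ℕ) × (ℕ × ℕ) → M) :
    ∑ q ∈ bilinearReps n, g q.swap = ∑ q ∈ bilinearReps n, g q := by
  refine sum_equiv (Equiv.prodComm _ _) ?_ fun _ _ => rfl
  rintro ⟨⟨a, x⟩, ⟨b, y⟩⟩
  simp only [Equiv.prodComm_apply, Prod.swap_prod_mk, mem_bilinearReps, add_comm (b * y)]
  tauto

lemma sum_bilinearReps_eq_two_nsmul_add [AddCommMonoid M] (n : ℕ) (u : ℕ × ℕ → ℕ)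
    {g : (ℕ × ℕ) × (ℕ × ℕ) → M} (hg : ∀ q, g q.swap = g q) :
    ∑ q ∈ bilinearReps n, g q =
      2 • ∑ q ∈ bilinearReps n with u q.1 < u q.2, g q +
        ∑ q ∈ bilinearReps n with u q.1 = u q.2, g q := by
  have hgt : ∑ q ∈ bilinearReps n with u q.2 < u q.1, g q =
      ∑ q ∈ bilinearReps n with u q.1 < u q.2, g q := by
    simp only [sum_filter]
    rw [← sum_bilinearReps_swap]
    simp only [Prod.fst_swap, Prod.snd_swap, hg]
  rw [two_nsmul]
  nth_rw 2 [← hgt]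
  simp only [sum_filter, ← sum_add_distrib]
  refine sum_congr rfl fun q _ => ?_
  rcases lt_trichotomy (u q.1) (u q.2) with h | h | h
  · simp [h, h.not_gt, h.ne]
  · simp [h]
  · simp [h, h.not_gt, h.ne']

lemma sum_bilinearReps_fst_lt_fst [AddCommMonoid M] (n : ℕ) (g : ℕ → ℕ → M) :
    ∑ q ∈ bilinearReps n with q.1.1 < q.2.1, g q.1.1 q.2.1 =
      ∑ q ∈ bilinearReps n with q.1.2 < q.2.2, g q.2.1 (q.1.1 + q.2.1) := by
  refine sum_nbij' (fun q => ((q.2.1 - q.1.1, q.2.2), (q.1.1, q.1.2 + q.2.2)))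
    (fun q => ((q.2.1, q.2.2 - q.1.2), (q.1.1 + q.2.1, q.1.2))) ?_ ?_ ?_ ?_ ?_ <;>
    rintro ⟨⟨a, x⟩, ⟨b, y⟩⟩ <;> simp only [mem_filter, mem_bilinearReps] <;>
    rintro ⟨⟨⟨ha, hx⟩, ⟨hb, hy⟩, rfl⟩, hlt⟩ <;> obtain ⟨c, rfl⟩ := Nat.exists_eq_add_of_lt hlt
  · refine ⟨⟨⟨by omega, hy⟩, ⟨ha, by omega⟩, ?_⟩, by omega⟩
    rw [show a + c + 1 - a = c + 1 by omega]
    ring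
  · refine ⟨⟨⟨hb, by omega⟩, ⟨by omega, hx⟩, ?_⟩, by omega⟩
    rw [show x + c + 1 - x = c + 1 by omega]
    ring
  · grind
  · grind
  · grind

lemma sum_bilinearReps_fst_eq_fst [AddCommMonoid M] (n : ℕ) (g : ℕ → M) :
    ∑ q ∈ bilinearReps n with q.1.1 = q.2.1, g q.1.1 =
      ∑ p ∈ n.divisorsAntidiagonal, (p.2 - 1) • g p.1 := by
  have hIco (p : ℕ × ℕ) : (p.2 - 1) • g p.1 = ∑ _x ∈ Ico 1 p.2, g p.1 := by simp
  simp only [hIco, sum_sigma']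
  refine sum_nbij' (fun q => ⟨(q.1.1, q.1.2 + q.2.2), q.1.2⟩)
    (fun s => ((s.1.1, s.2), (s.1.1, s.1.2 - s.2))) ?_ ?_ ?_ ?_ fun _ _ => rfl
  · rintro ⟨⟨a, x⟩, ⟨b, y⟩⟩
    simp only [mem_filter, mem_bilinearReps, mem_sigma, Nat.mem_divisorsAntidiagonal, mem_Ico]
    rintro ⟨⟨⟨ha, hx⟩, ⟨-, hy⟩, rfl⟩, rfl⟩
    exact ⟨⟨mul_add .., by positivity⟩, by omega⟩
  · rintro ⟨⟨d, e⟩, x⟩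
    simp only [mem_filter, mem_bilinearReps, mem_sigma, Nat.mem_divisorsAntidiagonal, mem_Ico]
    rintro ⟨⟨rfl, hn⟩, hx, hxe⟩
    have hd : 0 < d := Nat.pos_of_ne_zero (left_ne_zero_of_mul hn)
    exact ⟨⟨⟨hd, hx⟩, ⟨hd, by omega⟩, by rw [← mul_add, Nat.add_sub_cancel' hxe.le]⟩, trivial⟩
  · rintro ⟨⟨a, x⟩, ⟨b, y⟩⟩
    simp only [mem_filter]
    rintro ⟨-, rfl⟩
    simp
  · rintro ⟨⟨d, e⟩, x⟩
    simp only [mem_sigma, mem_Ico]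
    rintro ⟨-, -, hxe⟩
    simp [Nat.add_sub_cancel' hxe.le]

lemma sum_bilinearReps_snd_eq_snd [AddCommMonoid M] (n : ℕ) (g : ℕ → ℕ → M) :
    ∑ q ∈ bilinearReps n with q.1.2 = q.2.2, g q.1.1 (q.1.1 + q.2.1) =
      ∑ p ∈ n.divisorsAntidiagonal, ∑ a ∈ Ico 1 p.1, g a p.1 := by
  rw [sum_sigma']
  refine sum_nbij' (fun q => ⟨(q.1.1 + q.2.1, q.1.2), q.1.1⟩)
    (fun s => ((s.2, s.1.2), (s.1.1 - s.2, s.1.2))) ?_ ?_ ?_ ?_ fun _ _ => rfl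
  · rintro ⟨⟨a, x⟩, ⟨b, y⟩⟩
    simp only [mem_filter, mem_bilinearReps, mem_sigma, Nat.mem_divisorsAntidiagonal, mem_Ico]
    rintro ⟨⟨⟨ha, hx⟩, ⟨hb, -⟩, rfl⟩, rfl⟩
    exact ⟨⟨add_mul .., by positivity⟩, by omega⟩
  · rintro ⟨⟨d, e⟩, a⟩
    simp only [mem_filter, mem_bilinearReps, mem_sigma, Nat.mem_divisorsAntidiagonal, mem_Ico]
    rintro ⟨⟨rfl, hn⟩, ha, had⟩
    have he : 0 < e := Nat.pos_of_ne_zero (right_ne_zero_of_mul hn)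
    exact ⟨⟨⟨ha, he⟩, ⟨by omega, he⟩, by rw [← add_mul, Nat.add_sub_cancel' had.le]⟩, trivial⟩
  · rintro ⟨⟨a, x⟩, ⟨b, y⟩⟩
    simp only [mem_filter]
    rintro ⟨-, rfl⟩
    simp
  · rintro ⟨⟨d, e⟩, a⟩
    simp only [mem_sigma, mem_Ico]
    rintro ⟨-, -, had⟩
    simp [Nat.add_sub_cancel' had.le]

theorem sum_bilinearReps_sub_of_symm [AddCommGroup M] (n : ℕ) {φ : ℕ → ℕ → M}
    (hsymm : ∀ a b, φ a b = φ b a) (hadd : ∀ a b, φ a (a + b) = φ b (a + b)) :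
    ∑ q ∈ bilinearReps n, (φ q.1.1 (q.1.1 + q.2.1) - φ q.1.1 q.2.1) =
      ∑ d ∈ n.divisors, (∑ a ∈ Ico 1 d, φ a d - (n / d - 1) • φ d d) := by
  rw [← Nat.sum_divisorsAntidiagonal fun d e => ∑ a ∈ Ico 1 d, φ a d - (e - 1) • φ d d]
  have hlt : ∑ q ∈ bilinearReps n with q.1.1 < q.2.1, φ q.1.1 q.2.1 =
      ∑ q ∈ bilinearReps n with q.1.2 < q.2.2, φ q.1.1 (q.1.1 + q.2.1) := by
    rw [sum_bilinearReps_fst_lt_fst]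
    exact sum_congr rfl fun q _ => (hadd ..).symm
  have heq : ∑ q ∈ bilinearReps n with q.1.1 = q.2.1, φ q.1.1 q.2.1 =
      ∑ p ∈ n.divisorsAntidiagonal, (p.2 - 1) • φ p.1 p.1 := by
    rw [← sum_bilinearReps_fst_eq_fst n fun a => φ a a]
    exact sum_congr rfl fun q hq => by rw [(mem_filter.1 hq).2]
  rw [sum_sub_distrib, sum_sub_distrib, ← sum_bilinearReps_snd_eq_snd, ← heq,
    sum_bilinearReps_eq_two_nsmul_add n Prod.snd fun q => ?_,
    sum_bilinearReps_eq_two_nsmul_add n Prod.fst fun q => hsymm .., hlt]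
  · abel
  · rw [Prod.fst_swap, Prod.snd_swap, add_comm, ← hadd]

end BilinearReps

section Partition

open Finset Nat.Partition

variable (P : ℕ → Prop) [DecidablePred P]

lemma sum_count_restricted_eq_add {n d : ℕ} (hd : 0 < d) (hdn : d ≤ n) (hP : P d) :
    ∑ p ∈ restricted n P, p.parts.count d =
      #(restricted (n - d) P) + ∑ p ∈ restricted (n - d) P, p.parts.count d := by
  let e := partitionWithPartEquiv hd hdn
  have hfilter : ∑ p ∈ restricted n P with d ∈ p.parts, p.parts.count d =
      ∑ p ∈ restricted n P, p.parts.count d :=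
    sum_filter_of_ne fun p _ h => Multiset.count_ne_zero.1 h
  rw [← hfilter, card_eq_sum_ones, ← sum_add_distrib]
  refine sum_bij' (fun p hp => e ⟨p, (mem_filter.1 hp).2⟩) (fun p _ => (e.symm p).1) ?_ ?_
    (fun _ _ => by simp) (fun _ _ => by simp) ?_
  · intro p hp
    simp only [restricted, mem_filter, mem_univ, true_and] at hp ⊢
    exact fun i hi => hp.1 i (Multiset.mem_of_mem_erase (by simpa [e] using hi))
  · intro p hp
    simp only [restricted, mem_filter, mem_univ, true_and] at hp ⊢
    refine ⟨?_, (e.symm p).2⟩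
    simpa [e, hP] using hp
  · intro p hp
    have h := Multiset.count_pos.2 (mem_filter.1 hp).2
    simp only [e, partitionWithPartEquiv_apply_parts, Multiset.count_erase_self]
    omega

lemma sum_count_restricted {d : ℕ} (hd : 0 < d) (hP : P d) (n : ℕ) :
    ∑ p ∈ restricted n P, p.parts.count d =
      ∑ m ∈ range (n / d), #(restricted (n - d * (m + 1)) P) := by
  induction n using Nat.strong_induction_on with
  | _ n ih =>
    rcases lt_or_ge n d with hnd | hdn
    · rw [Nat.div_eq_of_lt hnd, sum_range_zero]
      refine sum_eq_zero fun p _ => Multiset.count_eq_zero.2 fun hmem => ?_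
      exact hnd.not_ge (le_of_mem_parts hmem)
    · rw [sum_count_restricted_eq_add P hd hdn hP, ih _ (Nat.sub_lt (hd.trans_le hdn) hd),
        Nat.div_eq_sub_div hd hdn, sum_range_succ', add_comm]
      refine congrArg₂ _ (sum_congr rfl fun m _ => ?_) (by rw [zero_add, mul_one])
      rw [Nat.sub_sub, ← mul_one_add, add_comm 1]

lemma sum_Ioc_sum_range_div {M : Type*} [AddCommMonoid M] (g : ℕ → ℕ → M) (n : ℕ) :
    ∑ d ∈ Ioc 0 n, ∑ m ∈ range (n / d), g d (n - d * (m + 1)) =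
      ∑ p ∈ antidiagonal n, ∑ d ∈ p.1.divisors, g d p.2 := by
  rw [sum_sigma', sum_sigma']
  refine sum_nbij' (fun s => ⟨(s.1 * (s.2 + 1), n - s.1 * (s.2 + 1)), s.1⟩)
    (fun s => ⟨s.2, s.1.1 / s.2 - 1⟩) ?_ ?_ ?_ ?_ fun _ _ => rfl
  · rintro ⟨d, m⟩
    simp only [mem_sigma, mem_Ioc, mem_range, HasAntidiagonal.mem_antidiagonal, Nat.mem_divisors]
    rintro ⟨⟨hd, -⟩, hm⟩
    have hle : d * (m + 1) ≤ n := by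
      rw [mul_comm]
      exact (Nat.le_div_iff_mul_le hd).1 hm
    exact ⟨Nat.add_sub_cancel' hle, dvd_mul_right .., by positivity⟩
  · rintro ⟨⟨i, j⟩, d⟩
    simp only [mem_sigma, mem_Ioc, mem_range, HasAntidiagonal.mem_antidiagonal, Nat.mem_divisors]
    rintro ⟨rfl, ⟨m, rfl⟩, hne⟩
    obtain ⟨hd, hm⟩ : 0 < d ∧ 0 < m := by
      simpa only [Nat.pos_iff_ne_zero, ← mul_ne_zero_iff] using hne
    have hle : d ≤ d * m := Nat.le_mul_of_pos_right d hm
    have hdiv : m ≤ (d * m + j) / d := (Nat.le_div_iff_mul_le hd).2 (by lia)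
    rw [Nat.mul_div_cancel_left m hd]
    omega
  · rintro ⟨d, m⟩
    simp only [mem_sigma, mem_Ioc]
    rintro ⟨⟨hd, -⟩, -⟩
    simp [Nat.mul_div_cancel_left _ hd]
  · rintro ⟨⟨i, j⟩, d⟩
    simp only [mem_sigma, HasAntidiagonal.mem_antidiagonal, Nat.mem_divisors]
    rintro ⟨rfl, ⟨m, rfl⟩, hne⟩
    obtain ⟨hd, hm⟩ : 0 < d ∧ 0 < m := by
      simpa only [Nat.pos_iff_ne_zero, ← mul_ne_zero_iff] using hne
    simp [Nat.mul_div_cancel_left m hd, Nat.sub_add_cancel hm]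

lemma sum_Ioc_mul_count {n : ℕ} (p : n.Partition) :
    ∑ d ∈ Ioc 0 n, d * p.parts.count d = n := by
  have hsub : p.parts.toFinset ⊆ Ioc 0 n := fun d hd => by
    rw [Multiset.mem_toFinset] at hd
    exact mem_Ioc.2 ⟨p.parts_pos hd, le_of_mem_parts hd⟩
  conv_rhs => rw [← p.parts_sum, sum_multiset_count_of_subset _ _ hsub]
  simp only [smul_eq_mul, mul_comm]

lemma mul_card_restricted (n : ℕ) :
    n * #(restricted n P) =
      ∑ p ∈ antidiagonal n, (∑ d ∈ p.1.divisors with P d, d) * #(restricted p.2 P) := by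
  have hcount : ∀ d ∈ Ioc 0 n, d * ∑ p ∈ restricted n P, p.parts.count d =
      ∑ m ∈ range (n / d), (if P d then d else 0) * #(restricted (n - d * (m + 1)) P) := by
    intro d hd
    split_ifs with hP
    · rw [sum_count_restricted P (mem_Ioc.1 hd).1 hP, mul_sum]
    · simp only [zero_mul, sum_const_zero, mul_eq_zero, sum_eq_zero_iff]
      refine Or.inr fun p hp => Multiset.count_eq_zero.2 fun hmem => hP ?_
      exact (mem_filter.1 hp).2 d hmem
  calc n * #(restricted n P)
      = ∑ p ∈ restricted n P, ∑ d ∈ Ioc 0 n, d * p.parts.count d := by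
        simp only [sum_Ioc_mul_count, sum_const, smul_eq_mul, mul_comm]
    _ = ∑ d ∈ Ioc 0 n, d * ∑ p ∈ restricted n P, p.parts.count d := by
        rw [sum_comm]
        simp only [mul_sum]
    _ = ∑ p ∈ antidiagonal n, ∑ d ∈ p.1.divisors,
          (if P d then d else 0) * #(restricted p.2 P) := by
        rw [sum_congr rfl hcount,
          sum_Ioc_sum_range_div fun d j => (if P d then d else 0) * #(restricted j P)]
    _ = _ := by simp only [← sum_mul, sum_filter]

end Partition

section LambertSeries

open Finset PowerSeries

variable {R : Type*} [CommSemiring R]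

/-- The Euler operator `X * d/dX`, which multiplies the `n`-th coefficient by `n`. -/
noncomputable def eulerDerivation (R : Type*) [CommSemiring R] : Derivation R R⟦X⟧ R⟦X⟧ :=
  (X : R⟦X⟧) • d⁄dX R

lemma coeff_eulerDerivation (n : ℕ) (F : R⟦X⟧) :
    coeff n (eulerDerivation R F) = n * coeff n F := by
  rw [eulerDerivation, Derivation.smul_apply, smul_eq_mul]
  cases n with
  | zero => simp
  | succ n => rw [coeff_succ_X_mul, coeff_derivative, mul_comm, Nat.cast_succ]

/-- The Lambert series `∑ u d * X ^ d / (1 - X ^ d)`, given by its coefficients. -/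
noncomputable def lambertSeries (u : ℕ → R) : R⟦X⟧ :=
  PowerSeries.mk fun n => ∑ d ∈ n.divisors, u d

lemma coeff_lambertSeries (n : ℕ) (u : ℕ → R) :
    coeff n (lambertSeries u) = ∑ d ∈ n.divisors, u d :=
  coeff_mk ..

lemma coeff_lambertSeries_mul_lambertSeries (n : ℕ) (u v : ℕ → R) :
    coeff n (lambertSeries u * lambertSeries v) =
      ∑ q ∈ bilinearReps n, u q.1.1 * v q.2.1 := by
  simp only [coeff_mul, coeff_lambertSeries, sum_bilinearReps, sum_product, ← mul_sum, ← sum_mul,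
    ← Nat.sum_divisorsAntidiagonal fun d _ => u d, ← Nat.sum_divisorsAntidiagonal fun d _ => v d]

lemma coeff_lambertSeries_mul (n : ℕ) (u : ℕ → R) (F : R⟦X⟧) :
    coeff n (lambertSeries u * F) =
      ∑ k ∈ range n, (∑ d ∈ (n - k).divisors, u d) * coeff k F := by
  rw [mul_comm, coeff_mul, Nat.sum_antidiagonal_eq_sum_range_succ_mk, sum_range_succ]
  simp [coeff_lambertSeries, mul_comm]

lemma eulerDerivation_mk_card_restricted (P : ℕ → Prop) [DecidablePred P] :
    eulerDerivation R (.mk fun n => (#(Nat.Partition.restricted n P) : R)) =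
      lambertSeries (fun d => if P d then (d : R) else 0) *
        .mk fun n => (#(Nat.Partition.restricted n P) : R) := by
  ext n
  have h := congrArg (Nat.cast : ℕ → R) (mul_card_restricted P n)
  push_cast at h
  simp only [coeff_eulerDerivation, coeff_mk, coeff_mul, coeff_lambertSeries, h, sum_filter]

lemma coeff_ofNat_mul (n m : ℕ) [m.AtLeastTwo] (F : R⟦X⟧) :
    coeff n (ofNat(m) * F) = ofNat(m) * coeff n F := by
  rw [← map_ofNat C m, coeff_C_mul]

end LambertSeries

section LiouvilleForm

open Finset

/-- The indicator function of the residue classes `±1` modulo `5`. -/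
def pmOneIndicator (r : ZMod 5) : ℤ := if r = 1 ∨ r = -1 then 1 else 0

lemma pmOneIndicator_natCast (d : ℕ) :
    pmOneIndicator d = if d % 5 = 1 ∨ d % 5 = 4 then 1 else 0 := by
  have h1 : (d : ZMod 5) = 1 ↔ d % 5 = 1 := ZMod.natCast_eq_natCast_iff' d 1 5
  have h4 : (d : ZMod 5) = -1 ↔ d % 5 = 4 := ZMod.natCast_eq_natCast_iff' d 4 5
  simp only [pmOneIndicator, h1, h4]

/-- A symmetric even weight modulo `5`. Its entries solve the linear system formed by
`liouvilleWeight_add_liouvilleWeight_neg_right`, which prescribes the coefficient of `2 * a * b` in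
`liouvilleForm_add_right_sub`, and `liouvilleWeight_add_left_neg_right_add`, which makes the
coefficients of `a ^ 2` and `b ^ 2` vanish there. -/
def liouvilleWeight (r s : ZMod 5) : ℤ :=
  !![0, 5, 0, 0, 5;
    5, 14, 8, 2, 11;
    0, 8, -4, 4, 2;
    0, 2, 4, -4, 8;
    5, 11, 2, 8, 14] r s

lemma liouvilleWeight_comm (r s : ZMod 5) : liouvilleWeight r s = liouvilleWeight s r := by
  revert r s; decide

lemma liouvilleWeight_neg_neg (r s : ZMod 5) :
    liouvilleWeight (-r) (-s) = liouvilleWeight r s := by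
  revert r s; decide

lemma liouvilleWeight_zero_right (r : ZMod 5) : liouvilleWeight r 0 = 5 * pmOneIndicator r := by
  revert r; decide

lemma liouvilleWeight_add_liouvilleWeight_neg_right (r s : ZMod 5) :
    liouvilleWeight r s + liouvilleWeight r (-s) =
      5 * pmOneIndicator r * pmOneIndicator s + 10 * pmOneIndicator r + 10 * pmOneIndicator s := by
  revert r s; decide

lemma liouvilleWeight_add_left_neg_right_add (r s : ZMod 5) :
    liouvilleWeight (r + s) (-s) + liouvilleWeight r s =
      liouvilleWeight s (r - s) + liouvilleWeight r (-s) := by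
  revert r s; decide

/-- The symmetric quadratic form with periodic coefficients to which Liouville's summation formula
`sum_bilinearReps_sub_of_symm` is applied: the square of each member of the zero-sum triple
`(a, -b, b - a)`, weighted by `liouvilleWeight` of the other two. -/
def liouvilleForm (a b : ℤ) : ℤ :=
  a ^ 2 * liouvilleWeight b (a - b) + b ^ 2 * liouvilleWeight a (b - a)
    + (a - b) ^ 2 * liouvilleWeight a (-b)

lemma liouvilleForm_comm (a b : ℤ) : liouvilleForm a b = liouvilleForm b a := by
  have h := liouvilleWeight_neg_neg b (-a)
  rw [neg_neg, liouvilleWeight_comm] at h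
  simp only [liouvilleForm, h]
  ring

lemma liouvilleForm_self (a : ℤ) : liouvilleForm a a = 10 * a ^ 2 * pmOneIndicator a := by
  simp only [liouvilleForm, sub_self, liouvilleWeight_zero_right]
  ring

lemma liouvilleForm_add_right (a b : ℤ) :
    liouvilleForm a (a + b) =
      a ^ 2 * liouvilleWeight (a + b) (-b) + (a + b) ^ 2 * liouvilleWeight a b
        + b ^ 2 * liouvilleWeight (a + b) (-a) := by
  have h := liouvilleWeight_neg_neg (a + b) (-a)
  rw [neg_neg, liouvilleWeight_comm] at h
  simp only [liouvilleForm, Int.cast_add, sub_add_cancel_left, add_sub_cancel_left, h]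
  ring

lemma liouvilleForm_add_right_comm (a b : ℤ) :
    liouvilleForm a (a + b) = liouvilleForm b (a + b) := by
  rw [liouvilleForm_add_right, add_comm a b, liouvilleForm_add_right, liouvilleWeight_comm a b,
    add_comm (a : ZMod 5)]
  ring

lemma liouvilleForm_add_right_sub (a b : ℤ) :
    liouvilleForm a (a + b) - liouvilleForm a b =
      2 * a * b * (5 * pmOneIndicator a * pmOneIndicator b
        + 10 * pmOneIndicator a + 10 * pmOneIndicator b) := by
  have ha := liouvilleWeight_add_left_neg_right_add a b
  have hb := liouvilleWeight_add_left_neg_right_add b a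
  have hneg := liouvilleWeight_neg_neg a (-b)
  rw [neg_neg, liouvilleWeight_comm] at hneg
  rw [add_comm (b : ZMod 5), liouvilleWeight_comm b a, hneg] at hb
  rw [← liouvilleWeight_add_liouvilleWeight_neg_right, liouvilleForm_add_right, liouvilleForm]
  linear_combination a ^ 2 * ha + b ^ 2 * hb

/-- The odd part of the dependence on `d` modulo `5` of the sums of `liouvilleWeight` over
`range d`; it cancels in `sum_Ico_liouvilleForm`. -/
def liouvilleWeightDefect (r : ZMod 5) : ℤ := ![0, 3, 2, -2, -3] r

lemma sum_range_liouvilleWeight : ∀ d : ℕ,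
    ∑ a ∈ range d, liouvilleWeight a (d - a) =
      6 * d - 4 * d * pmOneIndicator d + liouvilleWeightDefect d
  | 0 | 1 | 2 | 3 | 4 => by decide
  | d + 5 => by
    have h5 : (5 : ZMod 5) = 0 := rfl
    have hper : ∀ r : ZMod 5, ∑ i ∈ range 5, liouvilleWeight (r + i) (-i) =
      30 - 20 * pmOneIndicator r := by decide
    have ih := sum_range_liouvilleWeight d
    rw [sum_range_add]
    simp only [Nat.cast_add, Nat.cast_ofNat, h5, add_zero, sub_add_cancel_left, hper, ih]
    ring

lemma sum_range_sq_mul_liouvilleWeight : ∀ d : ℕ,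
    6 * ∑ a ∈ range d, (a : ℤ) ^ 2 * liouvilleWeight d (a - d) =
      4 * d ^ 3 + 2 * d + (12 * d ^ 3 - 15 * d ^ 2 + 6 * d) * pmOneIndicator d
        - 3 * d ^ 2 * liouvilleWeightDefect d
  | 0 | 1 | 2 | 3 | 4 => by decide
  | d + 5 => by
    have h5 : (5 : ZMod 5) = 0 := rfl
    have ih := sum_range_sq_mul_liouvilleWeight d
    have h0 : ∀ r : ZMod 5, ∑ i ∈ range 5, liouvilleWeight r i =
      10 + 30 * pmOneIndicator r := by decide
    have h1 : ∀ r : ZMod 5, 2 * ∑ i ∈ range 5, (i : ℤ) * liouvilleWeight r i =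
      50 + 125 * pmOneIndicator r - 5 * liouvilleWeightDefect r := by decide
    have h2 : ∀ r : ZMod 5, 2 * ∑ i ∈ range 5, (i : ℤ) ^ 2 * liouvilleWeight r i =
      170 + 385 * pmOneIndicator r - 25 * liouvilleWeightDefect r := by decide
    rw [sum_range_add]
    simp only [Nat.cast_add, Nat.cast_ofNat, h5, add_zero, add_sub_cancel_left, mul_add, ih]
    simp only [add_sq, add_mul, sum_add_distrib, ← mul_sum, mul_assoc]
    linear_combination 6 * (d : ℤ) ^ 2 * h0 d + 6 * (d : ℤ) * h1 d + 3 * h2 d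

lemma sum_Ico_liouvilleForm {d : ℕ} (hd : 0 < d) :
    3 * ∑ a ∈ Ico 1 d, liouvilleForm a d =
      22 * d ^ 3 + 2 * d + (6 * d - 30 * d ^ 2) * pmOneIndicator d := by
  have hreflect : ∑ a ∈ Ico 1 d, ((a : ℤ) - d) ^ 2 * liouvilleWeight a (-d) =
      ∑ a ∈ Ico 1 d, (a : ℤ) ^ 2 * liouvilleWeight d (a - d) := by
    have h := sum_Ico_reflect (fun a : ℕ => (a : ℤ) ^ 2 * liouvilleWeight d (a - d)) 1 d.le_succ
    simp only [Nat.add_sub_cancel_left, Nat.add_sub_cancel] at h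
    rw [← h]
    refine sum_congr rfl fun a ha => ?_
    rw [Nat.cast_sub (mem_Ico.1 ha).2.le, Nat.cast_sub (mem_Ico.1 ha).2.le, sub_sub_cancel_left,
      liouvilleWeight_comm, ← liouvilleWeight_neg_neg, neg_neg]
    ring
  have hsum := sum_range_liouvilleWeight d
  have hsq := sum_range_sq_mul_liouvilleWeight d
  rw [range_eq_Ico, sum_eq_sum_Ico_succ_bot hd] at hsum hsq
  simp only [Nat.cast_zero, sub_zero, zero_add, liouvilleWeight_comm 0,
    liouvilleWeight_zero_right, zero_pow two_ne_zero, zero_mul] at hsum hsq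
  simp only [liouvilleForm, Int.cast_natCast, sum_add_distrib, hreflect, ← mul_sum]
  linear_combination hsq + 3 * (d : ℤ) ^ 2 * hsum

end LiouvilleForm

section RogersRamanujan

open Finset PowerSeries

lemma three_mul_sum_bilinearReps_pmOneIndicator (n : ℕ) :
    3 * ∑ q ∈ bilinearReps n, 2 * (q.1.1 : ℤ) * q.2.1 *
        (5 * pmOneIndicator q.1.1 * pmOneIndicator q.2.1
          + 10 * pmOneIndicator q.1.1 + 10 * pmOneIndicator q.2.1) =
      ∑ d ∈ n.divisors,
        (2 * (11 * (d : ℤ) ^ 3 + d) + (6 - 30 * n) * (d * pmOneIndicator d)) := by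
  have h := sum_bilinearReps_sub_of_symm n (φ := fun a b : ℕ => liouvilleForm a b)
    (fun _ _ => liouvilleForm_comm ..)
    fun a b => by simp only [Nat.cast_add, liouvilleForm_add_right_comm (a : ℤ)]
  simp only [Nat.cast_add, liouvilleForm_add_right_sub, Int.cast_natCast] at h
  rw [h, mul_sum]
  refine sum_congr rfl fun d hd => ?_
  obtain ⟨⟨e, rfl⟩, hne⟩ := Nat.mem_divisors.1 hd
  have hdpos : 0 < d := Nat.pos_of_ne_zero (left_ne_zero_of_mul hne)
  have hepos : 1 ≤ e := Nat.pos_of_ne_zero (right_ne_zero_of_mul hne)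
  simp only [Nat.mul_div_cancel_left e hdpos, mul_sub,
    sum_Ico_liouvilleForm hdpos, liouvilleForm_self, nsmul_eq_mul, Nat.cast_sub hepos]
  push_cast
  ring

/-- The generating function of the sums of the divisors congruent to `±1` modulo `5`; it is the
logarithmic derivative of `mod5PartSeries` with respect to `eulerDerivation`. -/
noncomputable def pmOneDivisorSeries : ℤ⟦X⟧ := lambertSeries fun d => d * pmOneIndicator d

lemma riccati_pmOneDivisorSeries :
    15 * pmOneDivisorSeries ^ 2
        + 60 * (lambertSeries (fun d => (d : ℤ)) * pmOneDivisorSeries)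
        + 15 * eulerDerivation ℤ pmOneDivisorSeries - 3 * pmOneDivisorSeries =
      lambertSeries fun d => 11 * (d : ℤ) ^ 3 + d := by
  ext n
  have h := three_mul_sum_bilinearReps_pmOneIndicator n
  have hswap : ∑ q ∈ bilinearReps n, (q.2.1 : ℤ) * (q.1.1 * pmOneIndicator q.1.1) =
      ∑ q ∈ bilinearReps n, (q.1.1 : ℤ) * (q.2.1 * pmOneIndicator q.2.1) :=
    sum_bilinearReps_swap n fun q => (q.1.1 : ℤ) * (q.2.1 * pmOneIndicator q.2.1)
  have hexpand : ∑ q ∈ bilinearReps n, 2 * (q.1.1 : ℤ) * q.2.1 *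
        (5 * pmOneIndicator q.1.1 * pmOneIndicator q.2.1
          + 10 * pmOneIndicator q.1.1 + 10 * pmOneIndicator q.2.1) =
      10 * coeff n (pmOneDivisorSeries ^ 2)
        + 40 * coeff n (lambertSeries (fun d => (d : ℤ)) * pmOneDivisorSeries) := by
    simp only [pmOneDivisorSeries, sq, coeff_lambertSeries_mul_lambertSeries]
    rw [show (40 : ℤ) = 20 + 20 by rfl, add_mul]
    nth_rw 1 [← hswap]
    simp only [mul_sum, ← sum_add_distrib]
    exact sum_congr rfl fun q _ => by ring
  rw [hexpand, sum_add_distrib, ← mul_sum, ← mul_sum, ← coeff_lambertSeries,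
    ← coeff_lambertSeries, ← pmOneDivisorSeries] at h
  simp only [map_add, map_sub, coeff_ofNat_mul, coeff_eulerDerivation]
  linarith

/-- The generating function of `mod5PartCountB`, with integer coefficients. -/
noncomputable def mod5PartSeries : ℤ⟦X⟧ := .mk fun n => mod5PartCountB n

lemma coeff_mod5PartSeries (n : ℕ) : coeff n mod5PartSeries = mod5PartCountB n := coeff_mk ..

lemma mod5PartCountB_eq_card_restricted (n : ℕ) :
    mod5PartCountB n = #(Nat.Partition.restricted n fun d => d % 5 = 1 ∨ d % 5 = 4) := by
  rw [mod5PartCountB, Nat.card_eq_fintype_card, Fintype.card_subtype]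
  rfl

lemma eulerDerivation_mod5PartSeries :
    eulerDerivation ℤ mod5PartSeries = pmOneDivisorSeries * mod5PartSeries := by
  simp only [mod5PartSeries, pmOneDivisorSeries, mod5PartCountB_eq_card_restricted,
    pmOneIndicator_natCast, eulerDerivation_mk_card_restricted, mul_ite, mul_one, mul_zero]

lemma eulerDerivation_eulerDerivation_mod5PartSeries :
    15 * eulerDerivation ℤ (eulerDerivation ℤ mod5PartSeries)
        - 3 * eulerDerivation ℤ mod5PartSeries =
      lambertSeries (fun d => 11 * (d : ℤ) ^ 3 + d) * mod5PartSeries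
        - 60 * (lambertSeries (fun d => (d : ℤ)) * eulerDerivation ℤ mod5PartSeries) := by
  simp only [← riccati_pmOneDivisorSeries, eulerDerivation_mod5PartSeries,
    Derivation.leibniz, smul_eq_mul]
  ring

end RogersRamanujan

/-- Recursion for the coefficients of the second Rogers–Ramanujan product:
`(15n²-3n)b(n) = ∑_{k<n}(11σ₃(n-k)+σ₁(n-k))b(k) - 60∑_{k<n} k b(k) σ₁(n-k)`. -/
theorem mod5PartCountB_recursion (n : ℕ) (hn : 1 ≤ n) :
    ((15 * n ^ 2 - 3 * n : ℕ) : ℤ) * mod5PartCountB n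
      = ∑ k ∈ Finset.range n,
            (11 * (∑ d ∈ (n - k).divisors, (d : ℤ) ^ 3) + ∑ d ∈ (n - k).divisors, (d : ℤ))
              * mod5PartCountB k
        - 60 * ∑ k ∈ Finset.range n,
            (k : ℤ) * mod5PartCountB k * ∑ d ∈ (n - k).divisors, (d : ℤ) := by
  have hle : 3 * n ≤ 15 * n ^ 2 := by nlinarith
  have h := congrArg (PowerSeries.coeff n) eulerDerivation_eulerDerivation_mod5PartSeries
  simp only [map_sub, coeff_ofNat_mul, coeff_lambertSeries_mul, coeff_eulerDerivation,
    coeff_mod5PartSeries, Finset.sum_add_distrib, ← Finset.mul_sum] at h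
  simp only [mul_comm (_ * _) (∑ d ∈ Nat.divisors _, (d : ℤ)), ← h]
  rw [Nat.cast_sub hle]
  push_cast
  ring
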